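/- For any α > 0, any ε ∈ (0,1) and any tuple P = (P1,…,PM) of distributions with full support on a finite alphabet X, lim_{n→∞} τ*(n,α,ε|Ψ_n^Gut,P) = min_{j∈[M]} min_{(i,k)∈[M]^2, i≠k} D_{2α/(1+2α)}(P_j,P_i,P_k). -/

import Mathlib

open Filter Topology MeasureTheory

namespace Classification

variable {X : Type*} [Fintype X] [DecidableEq X]

/-- `P` is a probability mass function on the finite alphabet `X`. -/
def IsDist (P : X → ℝ) : Prop := (∀ x, 0 ≤ P x) ∧ ∑ x, P x = 1

/-- `P` has full support. -/
def FullSupport (P : X → ℝ) : Prop := ∀ x, 0 < P x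

/-- Empirical distribution (type) of a sequence `x : Fin m → X`. -/
noncomputable def empDist {m : ℕ} (x : Fin m → X) : X → ℝ :=
  fun a => ((Finset.univ.filter fun i => x i = a).card : ℝ) / m

/-- Real-valued KL divergence with the usual `0 · log 0 = 0` convention. -/
noncomputable def klDivR (Q P : X → ℝ) : ℝ := ∑ x, Q x * Real.log (Q x / P x)

open Classical in
/-- Extended-real-valued KL divergence: `⊤` when `Q` is not absolutely continuous w.r.t. `P`. -/
noncomputable def klDivE (Q P : X → ℝ) : EReal :=
  if ∀ x, P x = 0 → Q x = 0 then ((klDivR Q P : ℝ) : EReal) else ⊤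

/-- The mixture `(α P1 + P2) / (1 + α)`. -/
noncomputable def mix (P1 P2 : X → ℝ) (α : ℝ) : X → ℝ :=
  fun x => (α * P1 x + P2 x) / (1 + α)

/-- Generalized Jensen–Shannon divergence
`GJS(P1,P2,α) = α D(P1 ‖ (αP1+P2)/(1+α)) + D(P2 ‖ (αP1+P2)/(1+α))`. -/
noncomputable def GJS (P1 P2 : X → ℝ) (α : ℝ) : ℝ :=
  α * klDivR P1 (mix P1 P2 α) + klDivR P2 (mix P1 P2 α)

/-- Training sequence length `N = ⌈α n⌉`. -/
noncomputable def trainLen (α : ℝ) (n : ℕ) : ℕ := ⌈α * (n : ℝ)⌉₊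

/-- Probability of observing the sequence `x` under i.i.d. sampling from `P`. -/
noncomputable def seqProb (P : X → ℝ) {m : ℕ} (x : Fin m → X) : ℝ := ∏ i, P (x i)

/-- A binary classification test: output `true` means "declare H₂",
`false` means "declare H₁". -/
abbrev BTest (X : Type*) (α : ℝ) (n : ℕ) : Type _ :=
  (Fin (trainLen α n) → X) → (Fin (trainLen α n) → X) → (Fin n → X) → Bool

/-- Type-I error probability: probability of declaring `H₂` when `Y^n ~ P1` (hypothesis H₁). -/
noncomputable def beta1 {α : ℝ} {n : ℕ} (φ : BTest X α n) (P1 P2 : X → ℝ) : ℝ :=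
  ∑ x1 : Fin (trainLen α n) → X, ∑ x2 : Fin (trainLen α n) → X, ∑ y : Fin n → X,
    if φ x1 x2 y = true then seqProb P1 x1 * seqProb P2 x2 * seqProb P1 y else 0

/-- Type-II error probability: probability of declaring `H₁` when `Y^n ~ P2` (hypothesis H₂). -/
noncomputable def beta2 {α : ℝ} {n : ℕ} (φ : BTest X α n) (P1 P2 : X → ℝ) : ℝ :=
  ∑ x1 : Fin (trainLen α n) → X, ∑ x2 : Fin (trainLen α n) → X, ∑ y : Fin n → X,
    if φ x1 x2 y = false then seqProb P1 x1 * seqProb P2 x2 * seqProb P2 y else 0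

open Classical in
/-- Gutman's test with threshold `lam`: declare `H₁` iff `GJS(T̂_{x₁}, T̂_y, α) ≤ lam`. -/
noncomputable def gutman (α lam : ℝ) (n : ℕ) : BTest X α n :=
  fun x1 _ y => if GJS (empDist x1) (empDist y) α ≤ lam then false else true

open Classical in
/-- `- log x` as an extended real, with `⊤` at `x = 0`. -/
noncomputable def negLogE (x : ℝ) : EReal :=
  if x = 0 then ⊤ else ((-Real.log x : ℝ) : EReal)

/-- Gutman's exponent function
`F(P1,P2,α,lam) = min { α D(Q1‖P1) + D(Q2‖P2) : GJS(Q1,Q2,α) ≤ lam }` (as an inf in `EReal`). -/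
noncomputable def Fexp (P1 P2 : X → ℝ) (α lam : ℝ) : EReal :=
  sInf {v : EReal | ∃ Q1 Q2 : X → ℝ, IsDist Q1 ∧ IsDist Q2 ∧ GJS Q1 Q2 α ≤ lam ∧
    v = (α : EReal) * klDivE Q1 P1 + klDivE Q2 P2}

/-- Expectation of `f` under `P`. -/
noncomputable def expect (P : X → ℝ) (f : X → ℝ) : ℝ := ∑ x, P x * f x

/-- Variance of `f` under `P`. -/
noncomputable def varD (P : X → ℝ) (f : X → ℝ) : ℝ :=
  expect P (fun x => (f x - expect P f) ^ 2)

/-- Information density `ı₁(x) = log((1+α) P1(x) / (α P1(x) + P2(x)))`. -/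
noncomputable def iDens1 (P1 P2 : X → ℝ) (α : ℝ) (x : X) : ℝ :=
  Real.log ((1 + α) * P1 x / (α * P1 x + P2 x))

/-- Information density `ı₂(x) = log((1+α) P2(x) / (α P1(x) + P2(x)))`. -/
noncomputable def iDens2 (P1 P2 : X → ℝ) (α : ℝ) (x : X) : ℝ :=
  Real.log ((1 + α) * P2 x / (α * P1 x + P2 x))

/-- The dispersion `V(P1,P2,α) = α Var_{P1}[ı₁] + Var_{P2}[ı₂]`. -/
noncomputable def disp (P1 P2 : X → ℝ) (α : ℝ) : ℝ :=
  α * varD P1 (iDens1 P1 P2 α) + varD P2 (iDens2 P1 P2 α)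

/-- The standard Gaussian cumulative distribution function `Φ`. -/
noncomputable def stdCDF (x : ℝ) : ℝ :=
  (Real.sqrt (2 * Real.pi))⁻¹ * ∫ t in Set.Iic x, Real.exp (-t ^ 2 / 2)

/-- The inverse standard Gaussian cdf `Φ⁻¹`. -/
noncomputable def stdCDFInv (p : ℝ) : ℝ := sInf {x : ℝ | p ≤ stdCDF x}

/-- The non-asymptotic fundamental limit `λ*(n, α, ε | P1, P2)` for binary classification. -/
noncomputable def lamStar (α : ℝ) (n : ℕ) (ε : ℝ) (P1 P2 : X → ℝ) : ℝ :=
  sSup {lam : ℝ | 0 ≤ lam ∧ ∃ φ : BTest X α n,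
    (∀ Q1 Q2 : X → ℝ, IsDist Q1 → IsDist Q2 →
      beta1 φ Q1 Q2 ≤ Real.exp (-((n : ℝ) * lam))) ∧
    beta2 φ P1 P2 ≤ ε}

/-- Rényi divergence of order `γ`. -/
noncomputable def renyi (γ : ℝ) (P1 P2 : X → ℝ) : ℝ :=
  (1 / (γ - 1)) * Real.log (∑ x, P1 x ^ γ * P2 x ^ (1 - γ))

/-- The fundamental limit `τ*(n, α, ε | φ_n^Gut, P1, P2)` in the dual setting for Gutman's test. -/
noncomputable def tauStarGut (α : ℝ) (n : ℕ) (ε : ℝ) (P1 P2 : X → ℝ) : ℝ :=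
  sSup {τ : ℝ | 0 ≤ τ ∧ ∃ lam : ℝ, 0 ≤ lam ∧
    (∀ Q1 Q2 : X → ℝ, IsDist Q1 → IsDist Q2 →
      beta1 (gutman α lam n) Q1 Q2 ≤ ε) ∧
    beta2 (gutman α lam n) P1 P2 ≤ Real.exp (-((n : ℝ) * τ))}

/-- A two-sample homogeneity test: `true` means "declare H₂" (different distributions). -/
abbrev TTest (X : Type*) (α : ℝ) (n : ℕ) : Type _ :=
  (Fin (trainLen α n) → X) → (Fin n → X) → Bool

/-- False-alarm probability of a two-sample test. -/
noncomputable def betaFA {α : ℝ} {n : ℕ} (φ : TTest X α n) (P1 : X → ℝ) : ℝ :=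
  ∑ x : Fin (trainLen α n) → X, ∑ y : Fin n → X,
    if φ x y = true then seqProb P1 x * seqProb P1 y else 0

/-- Miss-detection probability of a two-sample test. -/
noncomputable def betaMD {α : ℝ} {n : ℕ} (φ : TTest X α n) (P1 P2 : X → ℝ) : ℝ :=
  ∑ x : Fin (trainLen α n) → X, ∑ y : Fin n → X,
    if φ x y = false then seqProb P1 x * seqProb P2 y else 0

/-- The fundamental limit `ξ*(n, α, ε | P1, P2)` for two-sample homogeneity testing. -/
noncomputable def xiStar (α : ℝ) (n : ℕ) (ε : ℝ) (P1 P2 : X → ℝ) : ℝ :=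
  sSup {lam : ℝ | 0 ≤ lam ∧ ∃ φ : TTest X α n,
    (∀ Q1 : X → ℝ, IsDist Q1 → betaFA φ Q1 ≤ Real.exp (-((n : ℝ) * lam))) ∧
    betaMD φ P1 P2 ≤ ε}

/-- An M-ary classification test with the rejection option: `some j` means "declare H_j",
`none` means "reject". -/
abbrev MTest (X : Type*) (M : ℕ) (α : ℝ) (n : ℕ) : Type _ :=
  (Fin M → Fin (trainLen α n) → X) → (Fin n → X) → Option (Fin M)

/-- Type-`j` error probability: probability of declaring some hypothesis other than
`H_j` or rejection, under `H_j`. -/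
noncomputable def betaM {M : ℕ} {α : ℝ} {n : ℕ} (ψ : MTest X M α n)
    (P : Fin M → X → ℝ) (j : Fin M) : ℝ :=
  ∑ xs : Fin M → Fin (trainLen α n) → X, ∑ y : Fin n → X,
    if ψ xs y ≠ some j ∧ ψ xs y ≠ none then
      (∏ i, seqProb (P i) (xs i)) * seqProb (P j) y else 0

/-- Type-`j` rejection probability: probability of rejecting under `H_j`. -/
noncomputable def zetaM {M : ℕ} {α : ℝ} {n : ℕ} (ψ : MTest X M α n)
    (P : Fin M → X → ℝ) (j : Fin M) : ℝ :=
  ∑ xs : Fin M → Fin (trainLen α n) → X, ∑ y : Fin n → X,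
    if ψ xs y = none then (∏ i, seqProb (P i) (xs i)) * seqProb (P j) y else 0

/-- The fundamental limit `λ*(n, α, ε | P)` for M-ary classification with rejection. -/
noncomputable def lamStarM (M : ℕ) (α : ℝ) (n : ℕ) (ε : Fin M → ℝ)
    (P : Fin M → X → ℝ) : ℝ :=
  sSup {lam : ℝ | 0 ≤ lam ∧ ∃ ψ : MTest X M α n,
    (∀ Q : Fin M → X → ℝ, (∀ i, IsDist (Q i)) → ∀ j,
      betaM ψ Q j ≤ Real.exp (-((n : ℝ) * lam))) ∧
    (∀ j, zetaM ψ P j ≤ ε j)}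

open Classical in
/-- Gutman's M-ary test with rejection and threshold `lam`. -/
noncomputable def gutmanM (M : ℕ) [NeZero M] (α lam : ℝ) (n : ℕ) : MTest X M α n :=
  fun xs y =>
    if ∃ i k : Fin M, i ≠ k ∧ GJS (empDist (xs i)) (empDist y) α ≤ lam ∧
        GJS (empDist (xs k)) (empDist y) α ≤ lam then none
    else if h : ∃ j : Fin M, GJS (empDist (xs j)) (empDist y) α ≤ lam then some h.choose
    else some 0

/-- The fundamental limit `τ*(n, α, ε | Ψ_n^Gut, P)` in the dual setting for
Gutman's M-ary test. -/
noncomputable def tauStarGutM (M : ℕ) [NeZero M] (α : ℝ) (n : ℕ) (ε : ℝ)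
    (P : Fin M → X → ℝ) : ℝ :=
  sSup {τ : ℝ | 0 ≤ τ ∧ ∃ lam : ℝ, 0 ≤ lam ∧
    (∀ Q : Fin M → X → ℝ, (∀ i, IsDist (Q i)) → ∀ j,
      betaM (gutmanM M α lam n) Q j ≤ ε) ∧
    (∀ j, zetaM (gutmanM M α lam n) P j ≤ Real.exp (-((n : ℝ) * τ)))}

/-- Generalized divergence of three distributions
`D_γ(P1,P2,P3) = (γ-1)⁻¹ log Σ_x P1(x)^{1-γ} P2(x)^{γ/2} P3(x)^{γ/2}`. -/
noncomputable def genDiv (γ : ℝ) (P1 P2 P3 : X → ℝ) : ℝ :=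
  (1 / (γ - 1)) * Real.log (∑ x, P1 x ^ (1 - γ) * P2 x ^ (γ / 2) * P3 x ^ (γ / 2))

/-- A binary classification test with the rejection option: `some 0` means "declare H₁",
`some 1` means "declare H₂", `none` means "reject". -/
abbrev RTest (X : Type*) (α : ℝ) (n : ℕ) : Type _ :=
  (Fin (trainLen α n) → X) → (Fin (trainLen α n) → X) → (Fin n → X) → Option (Fin 2)

/-- Type-1 error probability of a rejection test: declare `H₂` under `H₁`. -/
noncomputable def beta1R {α : ℝ} {n : ℕ} (ψ : RTest X α n) (P1 P2 : X → ℝ) : ℝ :=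
  ∑ x1 : Fin (trainLen α n) → X, ∑ x2 : Fin (trainLen α n) → X, ∑ y : Fin n → X,
    if ψ x1 x2 y = some 1 then seqProb P1 x1 * seqProb P2 x2 * seqProb P1 y else 0

/-- Type-2 error probability of a rejection test: declare `H₁` under `H₂`. -/
noncomputable def beta2R {α : ℝ} {n : ℕ} (ψ : RTest X α n) (P1 P2 : X → ℝ) : ℝ :=
  ∑ x1 : Fin (trainLen α n) → X, ∑ x2 : Fin (trainLen α n) → X, ∑ y : Fin n → X,
    if ψ x1 x2 y = some 0 then seqProb P1 x1 * seqProb P2 x2 * seqProb P2 y else 0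

open Classical in
/-- Type-`j` rejection probability of a binary rejection test. -/
noncomputable def zetaR {α : ℝ} {n : ℕ} (ψ : RTest X α n) (P1 P2 : X → ℝ) (j : Fin 2) : ℝ :=
  ∑ x1 : Fin (trainLen α n) → X, ∑ x2 : Fin (trainLen α n) → X, ∑ y : Fin n → X,
    if ψ x1 x2 y = none then
      seqProb P1 x1 * seqProb P2 x2 * seqProb (if j = 0 then P1 else P2) y else 0

/-- A binary test is type-based if it depends on the data only through the
triple of empirical distributions. -/
def TypeBasedB {α : ℝ} {n : ℕ} (φ : BTest X α n) : Prop :=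
  ∀ x1 x1' x2 x2' : Fin (trainLen α n) → X, ∀ y y' : Fin n → X,
    empDist x1 = empDist x1' → empDist x2 = empDist x2' → empDist y = empDist y' →
      φ x1 x2 y = φ x1' x2' y'

/-- An M-ary test is type-based if it depends on the data only through the
tuple of empirical distributions. -/
def TypeBasedM {M : ℕ} {α : ℝ} {n : ℕ} (ψ : MTest X M α n) : Prop :=
  ∀ xs xs' : Fin M → Fin (trainLen α n) → X, ∀ y y' : Fin n → X,
    (∀ i, empDist (xs i) = empDist (xs' i)) → empDist y = empDist y' →
      ψ xs y = ψ xs' y'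

open Classical in
/-- Probability of an event under hypothesis `H₂` in the binary setup. -/
noncomputable def prH2E (α : ℝ) (n : ℕ) (P1 P2 : X → ℝ)
    (E : (Fin (trainLen α n) → X) → (Fin (trainLen α n) → X) → (Fin n → X) → Prop) : ℝ :=
  ∑ x1 : Fin (trainLen α n) → X, ∑ x2 : Fin (trainLen α n) → X, ∑ y : Fin n → X,
    if E x1 x2 y then seqProb P1 x1 * seqProb P2 x2 * seqProb P2 y else 0

open Classical in
/-- Probability of an event under hypothesis `H_j` in the M-ary setup. -/
noncomputable def prHjM (M : ℕ) (α : ℝ) (n : ℕ) (P : Fin M → X → ℝ) (j : Fin M)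
    (E : (Fin M → Fin (trainLen α n) → X) → (Fin n → X) → Prop) : ℝ :=
  ∑ xs : Fin M → Fin (trainLen α n) → X, ∑ y : Fin n → X,
    if E xs y then (∏ i, seqProb (P i) (xs i)) * seqProb (P j) y else 0

/-- `η_n(α) = |X| log(n+1)/n + 2|X| log(1+αn)/(αn)`. -/
noncomputable def etaN (X : Type*) [Fintype X] (α : ℝ) (n : ℕ) : ℝ :=
  (Fintype.card X : ℝ) * Real.log ((n : ℝ) + 1) / n +
    2 * (Fintype.card X : ℝ) * Real.log (1 + α * n) / (α * n)

/-- `η_{n,M} = M |X| log(nα+1)/(nα) + |X| log(n+1)/n`. -/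
noncomputable def etaNM (X : Type*) [Fintype X] (M : ℕ) (α : ℝ) (n : ℕ) : ℝ :=
  (M : ℝ) * (Fintype.card X : ℝ) * Real.log ((n : ℝ) * α + 1) / ((n : ℝ) * α) +
    (Fintype.card X : ℝ) * Real.log ((n : ℝ) + 1) / n

/-- `Q` is an `m`-type: the empirical distribution of some sequence of length `m`. -/
def IsTypeDist (m : ℕ) (Q : X → ℝ) : Prop := ∃ x : Fin m → X, empDist x = Q

/-- The type-restricted exponent function `F_n`. -/
noncomputable def Fn (n : ℕ) (P1 P2 : X → ℝ) (α lam : ℝ) : ℝ :=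
  sInf {v : ℝ | ∃ Q1 Q2 : X → ℝ, IsTypeDist (trainLen α n) Q1 ∧ IsTypeDist n Q2 ∧
    GJS Q1 Q2 α ≤ lam ∧ v = α * klDivR Q1 P1 + klDivR Q2 P2}

/-- The second smallest value of a finite family of reals:
`min_{i ≠ j} max (v i) (v j)`. -/
noncomputable def secondMin {M : ℕ} (v : Fin M → ℝ) : ℝ :=
  sInf {t : ℝ | ∃ i j : Fin M, i ≠ j ∧ t = max (v i) (v j)}

/-- The tilted distribution `P^{(γ)}` with `γ = α/(1+α)`. -/
noncomputable def tilt (α : ℝ) (P1 P2 : X → ℝ) : X → ℝ :=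
  fun x => P1 x ^ (α / (1 + α)) * P2 x ^ (1 / (1 + α)) /
    ∑ a, P1 a ^ (α / (1 + α)) * P2 a ^ (1 / (1 + α))

/-!
Write `γ = 2α / (1 + 2α)` and let `q` be the normalized geometric mean of `P_j`, `P_i`, `P_k` with
weights `1 - γ`, `γ / 2`, `γ / 2`. The weights are chosen so that, when two training sequences and
the test sequence all have about the same type, their likelihood ratio under `(P_i, P_k, P_j)`
against `(q, q, q)` is about `exp (-n * genDiv γ P_j P_i P_k)`, whatever that type is.

Achievability: two acceptances force the three types to be close once the threshold is small, so a
rejection costs at least this exponent, minimized over the triples; the law of large numbers, which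
is uniform in the unknown tuple, makes any positive threshold meet the error constraint.

Converse: the error constraint holds for every tuple, in particular for `(q, …, q)`, where it forces
the test to accept a given pair of training and test sequences with probability at least
`(1 - ε) / M`. Given the test sequence, the acceptances of two training sequences are conditionally
i.i.d., so by Jensen's inequality both occur with at least the square of this probability, and the
change of measure from `q` carries this over to `(P_i, P_k, P_j)`.
-/

section Expectation

variable {Ω Ψ : Type*} [Fintype Ω] [Fintype Ψ] {w w' : Ω → ℝ} {f g : Ω → ℝ} {A B : Set Ω}

lemma IsDist.nonempty (hw : IsDist w) : Nonempty Ω := by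
  by_contra h
  rw [not_nonempty_iff] at h
  simpa using hw.2

lemma expect_const (hw : IsDist w) (c : ℝ) : expect w (fun _ ↦ c) = c := by
  simp only [expect, ← Finset.sum_mul, hw.2, one_mul]

lemma expect_mono (hw : IsDist w) (h : ∀ x, f x ≤ g x) : expect w f ≤ expect w g :=
  Finset.sum_le_sum fun x _ ↦ mul_le_mul_of_nonneg_left (h x) (hw.1 x)

lemma expect_sum {ι : Type*} (s : Finset ι) (F : ι → Ω → ℝ) :
    expect w (fun x ↦ ∑ i ∈ s, F i x) = ∑ i ∈ s, expect w (F i) := by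
  simp only [expect, Finset.mul_sum]
  exact Finset.sum_comm

lemma expect_mul_const (c : ℝ) : expect w (fun x ↦ f x * c) = expect w f * c := by
  simp only [expect, Finset.sum_mul, mul_assoc]

lemma expect_const_mul (c : ℝ) : expect w (fun x ↦ c * f x) = c * expect w f := by
  simp only [mul_comm c, expect_mul_const]

lemma sq_expect_le (hw : IsDist w) : expect w f ^ 2 ≤ expect w (fun x ↦ f x ^ 2) :=
  Real.pow_arith_mean_le_arith_mean_pow_of_even _ _ _ (fun x _ ↦ hw.1 x) hw.2 even_two

lemma abs_expect_le (hw : IsDist w) : |expect w f| ≤ ‖f‖ :=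
  calc |expect w f| ≤ ∑ x, w x * ‖f x‖ := by
        refine (Finset.abs_sum_le_sum_abs _ _).trans_eq (Finset.sum_congr rfl fun x _ ↦ ?_)
        rw [abs_mul, abs_of_nonneg (hw.1 x), Real.norm_eq_abs]
    _ ≤ expect w (fun _ ↦ ‖f‖) := expect_mono hw (norm_le_pi_norm f)
    _ = ‖f‖ := expect_const hw _

lemma abs_expect_sub_expect_le : |expect w f - expect w' f| ≤ Fintype.card Ω * dist w w' * ‖f‖ :=
  calc |expect w f - expect w' f| = |∑ x, (w x - w' x) * f x| := by
        simp only [expect, sub_mul, Finset.sum_sub_distrib]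
    _ ≤ ∑ _x : Ω, dist w w' * ‖f‖ := by
        refine (Finset.abs_sum_le_sum_abs _ _).trans (Finset.sum_le_sum fun x _ ↦ ?_)
        rw [abs_mul]
        exact mul_le_mul (dist_le_pi_dist w w' x) (norm_le_pi_norm f x) (abs_nonneg _) dist_nonneg
    _ = Fintype.card Ω * dist w w' * ‖f‖ := by simp [mul_assoc]

/-- Probability of the event `A` under the weights `w`. Using `Set.indicator` keeps events free of
decidability assumptions. -/
noncomputable def prob (w : Ω → ℝ) (A : Set Ω) : ℝ := expect w (A.indicator 1)

lemma prob_mono (hw : IsDist w) (h : A ⊆ B) : prob w A ≤ prob w B :=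
  expect_mono hw (Set.indicator_le_indicator_of_subset h fun _ ↦ zero_le_one)

lemma prob_le_one (hw : IsDist w) (A : Set Ω) : prob w A ≤ 1 :=
  (expect_mono hw (Set.indicator_le_self' fun _ _ ↦ zero_le_one)).trans_eq (expect_const hw 1)

lemma prob_compl (hw : IsDist w) (A : Set Ω) : prob w Aᶜ = 1 - prob w A := by
  rw [eq_sub_iff_add_eq, ← expect_const hw 1]
  simp only [prob, expect, ← Finset.sum_add_distrib, ← mul_add]
  exact Finset.sum_congr rfl fun x _ ↦
    congrArg (w x * ·) (congrFun (Set.indicator_compl_add_self A (1 : Ω → ℝ)) x)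

lemma prob_union_le (hw : IsDist w) (A B : Set Ω) : prob w (A ∪ B) ≤ prob w A + prob w B := by
  simp only [prob, expect, ← Finset.sum_add_distrib, ← mul_add]
  refine expect_mono hw fun x ↦ ?_
  by_cases hA : x ∈ A <;> by_cases hB : x ∈ B <;> simp [hA, hB]

lemma prob_le_prob_inter_add_prob_compl (hw : IsDist w) (A B : Set Ω) :
    prob w A ≤ prob w (A ∩ B) + prob w Bᶜ :=
  calc prob w A ≤ prob w (A ∩ B ∪ Bᶜ) :=
        prob_mono hw fun x hx ↦ (em (x ∈ B)).imp_left (⟨hx, ·⟩)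
    _ ≤ prob w (A ∩ B) + prob w Bᶜ := prob_union_le hw _ _

lemma prob_biUnion_le (hw : IsDist w) {ι : Type*} (s : Finset ι) (F : ι → Set Ω) :
    prob w (⋃ i ∈ s, F i) ≤ ∑ i ∈ s, prob w (F i) := by
  classical
  induction s using Finset.induction_on with
  | empty => simp [prob, expect]
  | insert i s hi ih =>
    rw [Finset.set_biUnion_insert, Finset.sum_insert hi]
    exact (prob_union_le hw _ _).trans (by gcongr)

lemma mul_prob_le_expect (hw : IsDist w) {c : ℝ} (hf : ∀ x, 0 ≤ f x) (hA : ∀ x ∈ A, c ≤ f x) :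
    c * prob w A ≤ expect w f := by
  rw [prob, mul_comm, ← expect_mul_const]
  refine expect_mono hw fun x ↦ ?_
  by_cases hx : x ∈ A <;> simp [hx, hf, hA]

lemma prob_le_mul_prob {K : ℝ} (h : ∀ x ∈ A, w x ≤ K * w' x) : prob w A ≤ K * prob w' A := by
  simp only [prob, expect, Finset.mul_sum]
  refine Finset.sum_le_sum fun x _ ↦ ?_
  by_cases hx : x ∈ A <;> simp [hx, h]

/-- Law of a pair of independent variables with laws `u` and `v`. -/
def prodDist (u : Ω → ℝ) (v : Ψ → ℝ) : Ω × Ψ → ℝ := fun z ↦ u z.1 * v z.2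

lemma expect_prodDist (u : Ω → ℝ) (v : Ψ → ℝ) (F : Ω × Ψ → ℝ) :
    expect (prodDist u v) F = expect v fun y ↦ expect u fun x ↦ F (x, y) := by
  simp only [expect, prodDist, Fintype.sum_prod_type_right, Finset.mul_sum]
  exact Finset.sum_congr rfl fun y _ ↦ Finset.sum_congr rfl fun x _ ↦ by ring

lemma IsDist.prodDist {u : Ω → ℝ} {v : Ψ → ℝ} (hu : IsDist u) (hv : IsDist v) :
    IsDist (prodDist u v) := by
  refine ⟨fun z ↦ mul_nonneg (hu.1 _) (hv.1 _), ?_⟩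
  simpa [expect, hu.2, hv.2] using expect_prodDist u v 1

lemma prob_prodDist_fst {u : Ω → ℝ} {v : Ψ → ℝ} (hv : IsDist v) (A : Set Ω) :
    prob (prodDist u v) {z | z.1 ∈ A} = prob u A := by
  rw [prob, expect_prodDist]
  exact expect_const hv (prob u A)

lemma prob_prodDist_snd {u : Ω → ℝ} {v : Ψ → ℝ} (hu : IsDist u) (B : Set Ψ) :
    prob (prodDist u v) {z | z.2 ∈ B} = prob v B := by
  rw [prob, expect_prodDist]
  exact congrArg (expect v) (funext fun y ↦ expect_const hu (B.indicator 1 y))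

/-- The fibre square `E ×_Ψ E`: pairs of points of `E` that share their second coordinate. -/
def fiberSq (E : Set (Ω × Ψ)) : Set (Ω × Ω × Ψ) := {z | (z.1, z.2.2) ∈ E ∧ (z.2.1, z.2.2) ∈ E}

omit [Fintype Ω] [Fintype Ψ] in
lemma fiberSq_mono {E F : Set (Ω × Ψ)} (h : E ⊆ F) : fiberSq E ⊆ fiberSq F :=
  fun _ hz ↦ ⟨h hz.1, h hz.2⟩

-- Given the second coordinate, the two points of the fibre are independent: apply Jensen.
lemma sq_prob_le_prob_fiberSq (u : Ω → ℝ) {v : Ψ → ℝ} (hv : IsDist v) (E : Set (Ω × Ψ)) :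
    prob (prodDist u v) E ^ 2 ≤ prob (prodDist u (prodDist u v)) (fiberSq E) := by
  calc prob (prodDist u v) E ^ 2
      ≤ expect v (fun y ↦ (expect u fun x ↦ E.indicator 1 (x, y)) ^ 2) := by
        rw [prob, expect_prodDist]
        exact sq_expect_le hv
    _ = prob (prodDist u (prodDist u v)) (fiberSq E) := by
        have h_indicator (x x' : Ω) (y : Ψ) : (fiberSq E).indicator (1 : Ω × Ω × Ψ → ℝ) (x, x', y) =
            E.indicator 1 (x, y) * E.indicator 1 (x', y) := by
          by_cases h : (x, y) ∈ E <;> by_cases h' : (x', y) ∈ E <;> simp [fiberSq, h, h']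
        simp only [prob, expect_prodDist, h_indicator, expect_mul_const, expect_const_mul, sq]

end Expectation

section ProductLaw

variable {ι A Ψ : Type*} [Fintype ι] [DecidableEq ι] [Fintype A] [Fintype Ψ] {w : ι → A → ℝ}

/-- Law of a family of independent variables with laws `w i`; definitionally,
`seqProb P = piDist fun _ ↦ P`. -/
def piDist (w : ι → A → ℝ) : (ι → A) → ℝ := fun x ↦ ∏ i, w i (x i)

lemma expect_piDist_prod (hw : ∀ i, IsDist (w i)) (s : Finset ι) (f : ι → A → ℝ) :
    expect (piDist w) (fun x ↦ ∏ i ∈ s, f i (x i)) = ∏ i ∈ s, expect (w i) (f i) := by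
  let F : ι → A → ℝ := fun i ↦ if i ∈ s then f i else fun _ ↦ 1
  have h_prod_F (x : ι → A) : ∏ i, F i (x i) = ∏ i ∈ s, f i (x i) := by
    rw [← Finset.prod_subset s.subset_univ fun i _ hi ↦ by simp only [F, hi, if_false]]
    exact Finset.prod_congr rfl fun i hi ↦ by simp only [F, hi, if_true]
  have h_expect_F (i : ι) : expect (w i) (F i) = if i ∈ s then expect (w i) (f i) else 1 := by
    by_cases hi : i ∈ s <;> simp only [F, hi, if_true, if_false, expect_const (hw i)]
  calc expect (piDist w) (fun x ↦ ∏ i ∈ s, f i (x i))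
      = ∑ x : ι → A, ∏ i, (w i (x i) * F i (x i)) := by
        simp only [expect, piDist, Finset.prod_mul_distrib, h_prod_F]
    _ = ∏ i, expect (w i) (F i) := by
        simp only [expect, Finset.prod_univ_sum, Fintype.piFinset_univ]
    _ = ∏ i ∈ s, expect (w i) (f i) := by
        simp only [h_expect_F, Finset.prod_ite_mem, Finset.univ_inter]

lemma IsDist.piDist (hw : ∀ i, IsDist (w i)) : IsDist (piDist w) := by
  refine ⟨fun x ↦ Finset.prod_nonneg fun i _ ↦ (hw i).1 _, ?_⟩
  simpa [expect] using expect_piDist_prod hw ∅ fun _ _ ↦ 1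

lemma expect_piDist_eval (hw : ∀ i, IsDist (w i)) (i : ι) (f : A → ℝ) :
    expect (piDist w) (fun x ↦ f (x i)) = expect (w i) f := by
  simpa using expect_piDist_prod hw {i} fun _ ↦ f

lemma expect_piDist_eval_mul_eval (hw : ∀ i, IsDist (w i)) {i k : ι} (hik : i ≠ k)
    (f g : A → ℝ) :
    expect (piDist w) (fun x ↦ f (x i) * g (x k)) = expect (w i) f * expect (w k) g := by
  simpa [Finset.prod_pair hik, hik.symm] using
    expect_piDist_prod hw {i, k} fun l ↦ if l = i then f else g

lemma expect_piDist_eval_pair (hw : ∀ i, IsDist (w i)) {i k : ι} (hik : i ≠ k) (f : A → A → ℝ) :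
    expect (piDist w) (fun x ↦ f (x i) (x k)) =
      expect (w k) fun b ↦ expect (w i) fun a ↦ f a b := by
  classical
  have h_split (x : ι → A) :
      f (x i) (x k) = ∑ b, f (x i) b * (Pi.single b 1 : A → ℝ) (x k) := by
    simp [Pi.single_apply]
  have h_single (b : A) : expect (w k) (Pi.single b 1) = w k b := by
    simp [expect, Pi.single_apply]
  simp only [h_split, expect_sum]
  refine Finset.sum_congr rfl fun b _ ↦ ?_
  rw [expect_piDist_eval_mul_eval hw hik (fun a ↦ f a b), h_single, mul_comm]

lemma prob_prodDist_piDist_eval (hw : ∀ i, IsDist (w i)) (v : Ψ → ℝ) (i : ι) (E : Set (A × Ψ)) :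
    prob (prodDist (piDist w) v) {z | (z.1 i, z.2) ∈ E} = prob (prodDist (w i) v) E := by
  simp only [prob, expect_prodDist]
  exact congrArg (expect v) (funext fun y ↦ expect_piDist_eval hw i fun a ↦ E.indicator 1 (a, y))

lemma prob_prodDist_piDist_eval_pair (hw : ∀ i, IsDist (w i)) (v : Ψ → ℝ) {i k : ι} (hik : i ≠ k)
    (E : Set (A × A × Ψ)) :
    prob (prodDist (piDist w) v) {z | (z.1 i, z.1 k, z.2) ∈ E} =
      prob (prodDist (w i) (prodDist (w k) v)) E := by
  simp only [prob, expect_prodDist]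
  exact congrArg (expect v) (funext fun y ↦
    expect_piDist_eval_pair hw hik fun a b ↦ E.indicator 1 (a, b, y))

end ProductLaw

section EmpiricalDistribution

variable {m : ℕ} {Q : X → ℝ}

omit [DecidableEq X] in
lemma IsDist.seqProb (hQ : IsDist Q) : IsDist (seqProb Q : (Fin m → X) → ℝ) :=
  IsDist.piDist fun _ ↦ hQ

lemma expect_sq_sum_of_centered {ι A : Type*} [Fintype ι] [DecidableEq ι] [Fintype A]
    {w f : ι → A → ℝ} (hw : ∀ i, IsDist (w i)) (hf : ∀ i, expect (w i) (f i) = 0) :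
    expect (piDist w) (fun x ↦ (∑ i, f i (x i)) ^ 2) =
      ∑ i, expect (w i) (fun a ↦ f i a ^ 2) := by
  simp only [sq, Finset.sum_mul_sum, expect_sum]
  refine Finset.sum_congr rfl fun i _ ↦ (Finset.sum_eq_single i (fun k _ hki ↦ ?_) (by simp)).trans
    (expect_piDist_eval hw i fun a ↦ f i a * f i a)
  rw [expect_piDist_eval_mul_eval hw hki.symm, hf, zero_mul]

omit [Fintype X] in
lemma mul_empDist (x : Fin m → X) (a : X) :
    m * empDist x a = ∑ t, if x t = a then (1 : ℝ) else 0 := by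
  rcases eq_or_ne m 0 with rfl | hm
  · simp
  · rw [empDist, mul_div_cancel₀ _ (Nat.cast_ne_zero.2 hm), Finset.sum_boole]

lemma mul_expect_empDist (x : Fin m → X) (f : X → ℝ) :
    m * expect (empDist x) f = ∑ t, f (x t) := by
  simp only [expect, Finset.mul_sum, ← mul_assoc, mul_empDist, Finset.sum_mul, ite_mul, one_mul,
    zero_mul]
  rw [Finset.sum_comm]
  simp only [Finset.sum_ite_eq, Finset.mem_univ, if_true]

lemma isDist_empDist (hm : m ≠ 0) (x : Fin m → X) : IsDist (empDist x) := by
  refine ⟨fun a ↦ by unfold empDist; positivity, ?_⟩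
  have h_mass := mul_expect_empDist x 1
  simp only [expect, Pi.one_apply, mul_one, Finset.sum_const, Finset.card_univ, Fintype.card_fin,
    nsmul_eq_mul] at h_mass
  exact (mul_eq_left₀ (Nat.cast_ne_zero.2 hm)).1 h_mass

lemma expect_sq_empDist_sub (hQ : IsDist Q) (hm : m ≠ 0) (a : X) :
    expect (seqProb Q) (fun x : Fin m → X ↦ (empDist x a - Q a) ^ 2) = Q a * (1 - Q a) / m := by
  let f : X → ℝ := fun b ↦ (if b = a then 1 else 0) - Q a
  have h_mean : expect Q f = 0 := by
    simp [f, expect, mul_sub, ← Finset.sum_mul, hQ.2]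
  have h_var : expect Q (fun b ↦ f b ^ 2) = Q a * (1 - Q a) := by
    have h_sq (b : X) : f b ^ 2 = (if b = a then 1 else 0) * (1 - 2 * Q a) + Q a ^ 2 := by
      simp only [f]
      split_ifs <;> ring
    simp only [expect, h_sq, mul_add, Finset.sum_add_distrib, ← mul_assoc, ← Finset.sum_mul,
      mul_ite, mul_one, mul_zero, Finset.sum_ite_eq', Finset.mem_univ, if_true, hQ.2]
    ring
  have hm' : (m : ℝ) ≠ 0 := Nat.cast_ne_zero.2 hm
  have h_sum (x : Fin m → X) : (empDist x a - Q a) ^ 2 = (∑ t, f (x t)) ^ 2 * ((m : ℝ) ^ 2)⁻¹ := by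
    simp only [f, Finset.sum_sub_distrib, ← mul_empDist, Finset.sum_const, Finset.card_univ,
      Fintype.card_fin, nsmul_eq_mul]
    field_simp
  have h_indep := expect_sq_sum_of_centered (ι := Fin m) (fun _ ↦ hQ) (fun _ ↦ h_mean)
  simp only [h_var, Finset.sum_const, Finset.card_univ, Fintype.card_fin, nsmul_eq_mul] at h_indep
  simp only [h_sum, expect_mul_const]
  refine (congrArg (· * ((m : ℝ) ^ 2)⁻¹) h_indep).trans ?_
  field_simp

lemma sq_dist_le_sum_sq {A : Type*} [Fintype A] (f g : A → ℝ) :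
    dist f g ^ 2 ≤ ∑ a, (f a - g a) ^ 2 := by
  have h_nonneg : ∀ a ∈ Finset.univ, 0 ≤ (f a - g a) ^ 2 := fun a _ ↦ sq_nonneg _
  refine (Real.le_sqrt dist_nonneg (Finset.sum_nonneg h_nonneg)).1 ?_
  exact (dist_pi_le_iff (Real.sqrt_nonneg _)).2 fun a ↦
    Real.abs_le_sqrt (Finset.single_le_sum h_nonneg (Finset.mem_univ a))

lemma prob_lt_dist_empDist_le (hQ : IsDist Q) (hm : m ≠ 0) {η : ℝ} (hη : 0 < η) :
    prob (seqProb Q) {x : Fin m → X | η < dist (empDist x) Q} ≤ 1 / (m * η ^ 2) := by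
  have hm' : (0 : ℝ) < m := Nat.cast_pos.2 hm.bot_lt
  have h_markov := mul_prob_le_expect (A := {x : Fin m → X | η < dist (empDist x) Q}) (c := η ^ 2)
    (f := fun x ↦ ∑ a, (empDist x a - Q a) ^ 2) hQ.seqProb
    (fun x ↦ Finset.sum_nonneg fun a _ ↦ sq_nonneg _)
    fun x hx ↦ (pow_le_pow_left₀ hη.le (le_of_lt hx) 2).trans (sq_dist_le_sum_sq _ _)
  have h_var : ∑ a, Q a * (1 - Q a) / m ≤ 1 / m := by
    rw [← Finset.sum_div]
    gcongr
    exact (Finset.sum_le_sum fun a _ ↦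
      mul_le_of_le_one_right (hQ.1 a) (sub_le_self 1 (hQ.1 a))).trans_eq hQ.2
  simp only [expect_sum, expect_sq_empDist_sub hQ hm] at h_markov
  rw [le_div_iff₀ (by positivity)]
  calc _ = m * (η ^ 2 * prob (seqProb Q) {x : Fin m → X | η < dist (empDist x) Q}) := by ring
    _ ≤ m * (1 / m) := by gcongr; exact h_markov.trans h_var
    _ = 1 := mul_one_div_cancel hm'.ne'

lemma eventually_prob_lt_dist_empDist_le {η ε : ℝ} (hη : 0 < η) (hε : 0 < ε) :
    ∀ᶠ m : ℕ in atTop, ∀ Q : X → ℝ, IsDist Q →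
      prob (seqProb Q) {x : Fin m → X | η < dist (empDist x) Q} ≤ ε := by
  have h_lim : Tendsto (fun m : ℕ ↦ 1 / (m * η ^ 2)) atTop (𝓝 0) :=
    (tendsto_natCast_atTop_atTop.atTop_mul_const (pow_pos hη 2)).const_div_atTop 1
  filter_upwards [h_lim.eventually_le_const hε, eventually_ne_atTop 0] with m h_le hm Q hQ
  exact (prob_lt_dist_empDist_le hQ hm hη).trans h_le

end EmpiricalDistribution

section Divergence

variable {A : Type*} [Fintype A] {P Q : A → ℝ} {α : ℝ}

lemma IsDist.le_one (hP : IsDist P) (a : A) : P a ≤ 1 :=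
  (Finset.single_le_sum (fun b _ ↦ hP.1 b) (Finset.mem_univ a)).trans_eq hP.2

lemma sq_sqrt_sub_sqrt_le {p q : ℝ} (hp : 0 ≤ p) (hq : 0 ≤ q) (h : q = 0 → p = 0) :
    (√p - √q) ^ 2 ≤ p * Real.log (p / q) - p + q := by
  rcases hp.eq_or_lt with rfl | hp
  · simp [Real.sq_sqrt hq]
  have hq : 0 < q := hq.lt_of_ne' fun h0 ↦ hp.ne' (h h0)
  have h_log : Real.log (p / q) = -(2 * Real.log (√q / √p)) := by
    rw [← Real.sqrt_div' _ hp.le, Real.log_sqrt (by positivity), ← inv_div, Real.log_inv]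
    ring
  have h_bound : Real.log (√q / √p) ≤ √q / √p - 1 := Real.log_le_sub_one_of_pos (by positivity)
  calc (√p - √q) ^ 2 = p * -(2 * (√q / √p - 1)) - p + q := by
        have hsp : √p ≠ 0 := (Real.sqrt_pos.2 hp).ne'
        field_simp
        linear_combination (-(2 * (√q - √p)) - √p) * Real.sq_sqrt hp.le + √p * Real.sq_sqrt hq.le
    _ ≤ p * Real.log (p / q) - p + q := by rw [h_log]; gcongr

lemma sum_sq_sqrt_sub_sqrt_le_klDivR (hP : IsDist P) (hQ : IsDist Q) (h : ∀ a, Q a = 0 → P a = 0) :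
    ∑ a, (√(P a) - √(Q a)) ^ 2 ≤ klDivR P Q := by
  refine (Finset.sum_le_sum fun a _ ↦ sq_sqrt_sub_sqrt_le (hP.1 a) (hQ.1 a) (h a)).trans_eq ?_
  simp [Finset.sum_add_distrib, hP.2, hQ.2, klDivR]

-- Pinsker's inequality up to the constant, through the Hellinger distance.
lemma sq_dist_le_four_mul_klDivR (hP : IsDist P) (hQ : IsDist Q) (h : ∀ a, Q a = 0 → P a = 0) :
    dist P Q ^ 2 ≤ 4 * klDivR P Q :=
  calc dist P Q ^ 2 ≤ ∑ a, (P a - Q a) ^ 2 := sq_dist_le_sum_sq P Q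
    _ ≤ ∑ a, 4 * (√(P a) - √(Q a)) ^ 2 := by
        refine Finset.sum_le_sum fun a _ ↦ ?_
        have h_add : √(P a) + √(Q a) ≤ 2 := by
          linarith [Real.sqrt_le_one.2 (hP.le_one a), Real.sqrt_le_one.2 (hQ.le_one a)]
        calc (P a - Q a) ^ 2 = (√(P a) + √(Q a)) ^ 2 * (√(P a) - √(Q a)) ^ 2 := by
              rw [← mul_pow, ← sq_sub_sq, Real.sq_sqrt (hP.1 a), Real.sq_sqrt (hQ.1 a)]
          _ ≤ 2 ^ 2 * (√(P a) - √(Q a)) ^ 2 := by gcongr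
          _ = 4 * (√(P a) - √(Q a)) ^ 2 := by norm_num
    _ ≤ 4 * klDivR P Q := by
        rw [← Finset.mul_sum]
        gcongr
        exact sum_sq_sqrt_sub_sqrt_le_klDivR hP hQ h

lemma IsDist.mix (hα : 0 < α) (hP : IsDist P) (hQ : IsDist Q) : IsDist (mix P Q α) := by
  refine ⟨fun a ↦ ?_, ?_⟩
  · have := hP.1 a
    have := hQ.1 a
    unfold Classification.mix
    positivity
  · simp only [Classification.mix, ← Finset.sum_div, Finset.sum_add_distrib, ← Finset.mul_sum,
      hP.2, hQ.2]
    field_simp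
    ring

lemma eq_zero_of_mix_eq_zero (hα : 0 < α) (hP : IsDist P) (hQ : IsDist Q) {a : A}
    (h : mix P Q α a = 0) : P a = 0 ∧ Q a = 0 := by
  have hPa := hP.1 a
  have hQa := hQ.1 a
  rw [mix, div_eq_zero_iff, or_iff_left (by positivity),
    add_eq_zero_iff_of_nonneg (by positivity) hQa, mul_eq_zero, or_iff_right hα.ne'] at h
  exact h

lemma dist_right_mix (hα : 0 < α) (P Q : A → ℝ) :
    dist Q (mix P Q α) = α / (1 + α) * dist P Q := by
  have h_sub : Q - mix P Q α = (α / (1 + α)) • (Q - P) := by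
    ext a
    simp only [mix, Pi.sub_apply, Pi.smul_apply, smul_eq_mul]
    field_simp
    ring
  rw [dist_eq_norm, h_sub, norm_smul, Real.norm_of_nonneg (by positivity), ← dist_eq_norm,
    dist_comm]

lemma klDivR_nonneg (hP : IsDist P) (hQ : IsDist Q) (h : ∀ a, Q a = 0 → P a = 0) :
    0 ≤ klDivR P Q :=
  (Finset.sum_nonneg fun _ _ ↦ sq_nonneg _).trans (sum_sq_sqrt_sub_sqrt_le_klDivR hP hQ h)

lemma sq_dist_le_GJS (hα : 0 < α) (hP : IsDist P) (hQ : IsDist Q) :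
    (α / (1 + α) * dist P Q) ^ 2 ≤ 4 * GJS P Q α := by
  have h_left := klDivR_nonneg hP (hP.mix hα hQ) fun _ h ↦ (eq_zero_of_mix_eq_zero hα hP hQ h).1
  rw [← dist_right_mix hα]
  refine (sq_dist_le_four_mul_klDivR hQ (hP.mix hα hQ)
    fun _ h ↦ (eq_zero_of_mix_eq_zero hα hP hQ h).2).trans ?_
  rw [GJS]
  gcongr
  exact le_add_of_nonneg_left (mul_nonneg hα.le h_left)

lemma dist_le_of_GJS_le (hα : 0 < α) (hP : IsDist P) (hQ : IsDist Q) {lam : ℝ}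
    (h : GJS P Q α ≤ lam) : dist P Q ≤ 2 * (1 + α) / α * √lam := by
  have h_sqrt : α / (1 + α) * dist P Q ≤ √(2 ^ 2 * lam) :=
    Real.le_sqrt_of_sq_le (by linarith [sq_dist_le_GJS hα hP hQ])
  rw [Real.sqrt_mul (by positivity), Real.sqrt_sq zero_le_two] at h_sqrt
  calc dist P Q = (1 + α) / α * (α / (1 + α) * dist P Q) := by field_simp
    _ ≤ (1 + α) / α * (2 * √lam) := by gcongr
    _ = 2 * (1 + α) / α * √lam := by ring

lemma mul_log_div_add_mul_log_div_le {p q : ℝ} (hα : 0 < α) (hp : 0 ≤ p) (hq : 0 ≤ q) :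
    α * (p * Real.log (p / ((α * p + q) / (1 + α)))) + q * Real.log (q / ((α * p + q) / (1 + α))) ≤
      (1 + α) * |p - q| := by
  have h_log {r x : ℝ} (hr : 0 < r) (hx : 0 ≤ x) : x * Real.log (x / r) ≤ x * (x / r - 1) := by
    rcases hx.eq_or_lt with rfl | hx
    · simp
    · exact mul_le_mul_of_nonneg_left (Real.log_le_sub_one_of_pos (by positivity)) hx.le
  rcases (show 0 ≤ α * p + q by positivity).eq_or_lt with h0 | hs
  · rw [← h0]
    simpa using by positivity
  set s := α * p + q with hs_def
  have h_abs : α * |p - q| ≤ (1 + α) * s :=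
    calc α * |p - q| ≤ α * (p + q) := by
          gcongr
          exact abs_sub_le_iff.2 ⟨by linarith, by linarith⟩
      _ ≤ (1 + α) * s := by
          have : 0 ≤ q + α * α * p := by positivity
          linear_combination this
  calc α * (p * Real.log (p / (s / (1 + α)))) + q * Real.log (q / (s / (1 + α)))
      ≤ α * (p * (p / (s / (1 + α)) - 1)) + q * (q / (s / (1 + α)) - 1) := by
        gcongr ?_ * ?_ + ?_
        · exact h_log (by positivity) hp
        · exact h_log (by positivity) hq
    _ = α * |p - q| ^ 2 / s := by
        rw [sq_abs]
        field_simp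
        rw [hs_def]
        ring
    _ = (α * |p - q|) / s * |p - q| := by ring
    _ ≤ (1 + α) * |p - q| := by
        gcongr
        exact (div_le_iff₀ hs).2 h_abs

lemma GJS_le_dist (hα : 0 < α) (hP : IsDist P) (hQ : IsDist Q) :
    GJS P Q α ≤ (1 + α) * Fintype.card A * dist P Q := by
  calc GJS P Q α = ∑ a, (α * (P a * Real.log (P a / mix P Q α a)) +
        Q a * Real.log (Q a / mix P Q α a)) := by
        simp only [GJS, klDivR, Finset.mul_sum, Finset.sum_add_distrib]
    _ ≤ ∑ _a : A, (1 + α) * dist P Q := by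
        refine Finset.sum_le_sum fun a _ ↦
          (mul_log_div_add_mul_log_div_le hα (hP.1 a) (hQ.1 a)).trans ?_
        gcongr
        exact dist_le_pi_dist P Q a
    _ = (1 + α) * Fintype.card A * dist P Q := by simp; ring

end Divergence

section GeometricMean

variable {A : Type*} [Fintype A] {P Q R : A → ℝ} {α γ : ℝ}

/-- The normalized geometric mean of `P1`, `P2`, `P3` with weights `1 - γ`, `γ / 2`, `γ / 2`, i.e.
the law whose normalizing constant defines `genDiv γ P1 P2 P3`. -/
noncomputable def genTilt (γ : ℝ) (P1 P2 P3 : A → ℝ) : A → ℝ := fun x ↦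
  P1 x ^ (1 - γ) * P2 x ^ (γ / 2) * P3 x ^ (γ / 2) /
    ∑ a, P1 a ^ (1 - γ) * P2 a ^ (γ / 2) * P3 a ^ (γ / 2)

omit [Fintype A] in
lemma geomMean_pos (γ : ℝ) (hR : FullSupport R) (hP : FullSupport P) (hQ : FullSupport Q) (a : A) :
    0 < R a ^ (1 - γ) * P a ^ (γ / 2) * Q a ^ (γ / 2) := by
  have := hR a
  have := hP a
  have := hQ a
  positivity

lemma sum_geomMean_pos [Nonempty A] (γ : ℝ) (hR : FullSupport R) (hP : FullSupport P)
    (hQ : FullSupport Q) : 0 < ∑ a, R a ^ (1 - γ) * P a ^ (γ / 2) * Q a ^ (γ / 2) :=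
  Finset.sum_pos (fun a _ ↦ geomMean_pos γ hR hP hQ a) Finset.univ_nonempty

lemma fullSupport_genTilt (γ : ℝ) (hR : FullSupport R) (hP : FullSupport P) (hQ : FullSupport Q) :
    FullSupport (genTilt γ R P Q) := fun a ↦
  have : Nonempty A := ⟨a⟩
  div_pos (geomMean_pos γ hR hP hQ a) (sum_geomMean_pos γ hR hP hQ)

lemma isDist_genTilt [Nonempty A] (γ : ℝ) (hR : FullSupport R) (hP : FullSupport P)
    (hQ : FullSupport Q) : IsDist (genTilt γ R P Q) := by
  refine ⟨fun a ↦ (fullSupport_genTilt γ hR hP hQ a).le, ?_⟩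
  simp only [genTilt, ← Finset.sum_div]
  exact div_self (sum_geomMean_pos γ hR hP hQ).ne'

lemma log_genTilt (hγ : γ ≠ 1) (hR : FullSupport R) (hP : FullSupport P) (hQ : FullSupport Q)
    (a : A) :
    Real.log (genTilt γ R P Q a) = (1 - γ) * Real.log (R a) +
      γ / 2 * (Real.log (P a) + Real.log (Q a)) + (1 - γ) * genDiv γ R P Q := by
  have : Nonempty A := ⟨a⟩
  have hRa := Real.rpow_pos_of_pos (hR a) (1 - γ)
  have hPa := Real.rpow_pos_of_pos (hP a) (γ / 2)
  have hQa := Real.rpow_pos_of_pos (hQ a) (γ / 2)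
  rw [genTilt, Real.log_div (by positivity) (sum_geomMean_pos γ hR hP hQ).ne',
    Real.log_mul (by positivity) hQa.ne', Real.log_mul hRa.ne' hPa.ne', Real.log_rpow (hR a),
    Real.log_rpow (hP a), Real.log_rpow (hQ a), genDiv]
  have : γ - 1 ≠ 0 := sub_ne_zero.2 hγ
  field_simp
  ring

lemma genDiv_nonneg (hγ : γ ∈ Set.Ico 0 1) (hR : IsDist R) (hP : IsDist P) (hQ : IsDist Q) :
    0 ≤ genDiv γ R P Q := by
  have h_sum : ∑ a, R a ^ (1 - γ) * P a ^ (γ / 2) * Q a ^ (γ / 2) ≤ 1 :=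
    calc ∑ a, R a ^ (1 - γ) * P a ^ (γ / 2) * Q a ^ (γ / 2)
        ≤ ∑ a, ((1 - γ) * R a + γ / 2 * P a + γ / 2 * Q a) :=
          Finset.sum_le_sum fun a _ ↦ Real.geom_mean_le_arith_mean3_weighted
            (by linarith [hγ.2]) (by linarith [hγ.1]) (by linarith [hγ.1])
            (hR.1 a) (hP.1 a) (hQ.1 a) (by ring)
      _ = 1 := by
          simp only [Finset.sum_add_distrib, ← Finset.mul_sum, hR.2, hP.2, hQ.2]
          ring
  refine mul_nonneg_of_nonpos_of_nonpos (div_nonpos_of_nonneg_of_nonpos zero_le_one ?_)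
    (Real.log_nonpos ?_ h_sum)
  · linarith [hγ.2]
  · exact Finset.sum_nonneg fun a _ ↦ mul_nonneg (mul_nonneg (Real.rpow_nonneg (hR.1 a) _)
      (Real.rpow_nonneg (hP.1 a) _)) (Real.rpow_nonneg (hQ.1 a) _)

lemma two_mul_div_mem_Ico (hα : 0 ≤ α) : 2 * α / (1 + 2 * α) ∈ Set.Ico 0 1 :=
  ⟨by positivity, (div_lt_one (by positivity)).2 (by linarith)⟩

/-- The log-likelihood ratio of `P` against `Q`. -/
noncomputable def logRatio (P Q : A → ℝ) : A → ℝ := fun a ↦ Real.log (P a / Q a)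

lemma logRatio_genTilt_add (hα : 0 < α) (hR : FullSupport R) (hP : FullSupport P)
    (hQ : FullSupport Q) (a : A) :
    let q := genTilt (2 * α / (1 + 2 * α)) R P Q
    logRatio R q a + α * logRatio P q a + α * logRatio Q q a =
      -genDiv (2 * α / (1 + 2 * α)) R P Q := by
  intro q
  have hγ : 1 - 2 * α / (1 + 2 * α) = 1 / (1 + 2 * α) := by field_simp; ring
  have hqa : q a ≠ 0 := (fullSupport_genTilt _ hR hP hQ a).ne'
  have h_log := log_genTilt (two_mul_div_mem_Ico hα.le).2.ne hR hP hQ a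
  simp only [logRatio, Real.log_div (hR a).ne' hqa, Real.log_div (hP a).ne' hqa,
    Real.log_div (hQ a).ne' hqa]
  rw [hγ] at h_log
  field_simp at h_log
  linear_combination -h_log

end GeometricMean

section TrainLen

variable {α : ℝ}

lemma trainLen_ne_zero (hα : 0 < α) {n : ℕ} (hn : n ≠ 0) : trainLen α n ≠ 0 := by
  rw [trainLen, Nat.ne_zero_iff_zero_lt, Nat.ceil_pos]
  have := hn.bot_lt
  positivity

lemma abs_trainLen_sub_le (hα : 0 ≤ α) (n : ℕ) : |(trainLen α n : ℝ) - α * n| ≤ 1 := by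
  have h_lt := Nat.ceil_lt_add_one (show 0 ≤ α * n by positivity)
  have h_le := Nat.le_ceil (α * n)
  rw [trainLen, abs_of_nonneg (by linarith)]
  linarith

lemma tendsto_trainLen (hα : 0 < α) : Tendsto (trainLen α) atTop atTop :=
  tendsto_nat_ceil_atTop.comp (tendsto_natCast_atTop_atTop.const_mul_atTop hα)

end TrainLen

section ChangeOfMeasure

variable {P Q R : X → ℝ} {α η : ℝ} {n : ℕ}

lemma seqProb_eq_exp_mul {m : ℕ} (hP : FullSupport P) (hQ : FullSupport Q) (x : Fin m → X) :
    seqProb P x = Real.exp (m * expect (empDist x) (logRatio P Q)) * seqProb Q x := by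
  rw [mul_expect_empDist, Real.exp_sum, seqProb, seqProb, ← Finset.prod_mul_distrib]
  refine Finset.prod_congr rfl fun t _ ↦ ?_
  rw [logRatio, Real.exp_log (div_pos (hP _) (hQ _)), div_mul_cancel₀ _ (hQ _).ne']

lemma abs_trainLen_mul_expect_sub_le {A : Type*} [Fintype A] {w w' : A → ℝ} (hw : IsDist w)
    (hα : 0 ≤ α) (n : ℕ) (f : A → ℝ) :
    |trainLen α n * expect w f - α * n * expect w' f| ≤
      (1 + α * n * (Fintype.card A * dist w w')) * ‖f‖ :=
  calc |trainLen α n * expect w f - α * n * expect w' f|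
      = |(trainLen α n - α * n) * expect w f + α * n * (expect w f - expect w' f)| := by
        congr 1
        ring
    _ ≤ |(trainLen α n : ℝ) - α * n| * |expect w f| + α * n * |expect w f - expect w' f| := by
        refine (abs_add_le _ _).trans_eq ?_
        rw [abs_mul, abs_mul (α * n), abs_of_nonneg (show 0 ≤ α * n by positivity)]
    _ ≤ 1 * ‖f‖ + α * n * (Fintype.card A * dist w w' * ‖f‖) := by
        gcongr
        · exact abs_trainLen_sub_le hα n
        · exact abs_expect_le hw
        · exact abs_expect_sub_expect_le
    _ = (1 + α * n * (Fintype.card A * dist w w')) * ‖f‖ := by ring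

/-- Joint law of two training sequences drawn from `P` and `Q` and a test sequence drawn from
`R`. -/
noncomputable def sampleDist (α : ℝ) (n : ℕ) (P Q R : X → ℝ) :
    (Fin (trainLen α n) → X) × (Fin (trainLen α n) → X) × (Fin n → X) → ℝ :=
  prodDist (seqProb P) (prodDist (seqProb Q) (seqProb R))

/-- Pairs of sequences whose types are at distance at most `η`, in the sup metric on `X → ℝ`. -/
def closeTypes {N n : ℕ} (η : ℝ) : Set ((Fin N → X) × (Fin n → X)) :=
  {z | dist (empDist z.1) (empDist z.2) ≤ η}

/-- The log-likelihood ratio of the three samples `z` under `P`, `Q`, `R` against all three being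
drawn from `q`. -/
noncomputable def sampleLogRatio (P Q R q : X → ℝ)
    (z : (Fin (trainLen α n) → X) × (Fin (trainLen α n) → X) × (Fin n → X)) : ℝ :=
  trainLen α n * expect (empDist z.1) (logRatio P q) +
    trainLen α n * expect (empDist z.2.1) (logRatio Q q) +
    n * expect (empDist z.2.2) (logRatio R q)

omit [DecidableEq X] in
lemma IsDist.sampleDist (hP : IsDist P) (hQ : IsDist Q) (hR : IsDist R) :
    IsDist (sampleDist α n P Q R) :=
  hP.seqProb.prodDist (hQ.seqProb.prodDist hR.seqProb)

lemma sampleDist_eq_exp_mul {q : X → ℝ} (hP : FullSupport P) (hQ : FullSupport Q)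
    (hR : FullSupport R) (hq : FullSupport q)
    (z : (Fin (trainLen α n) → X) × (Fin (trainLen α n) → X) × (Fin n → X)) :
    sampleDist α n P Q R z = Real.exp (sampleLogRatio P Q R q z) * sampleDist α n q q q z := by
  simp only [sampleDist, prodDist, sampleLogRatio, Real.exp_add]
  rw [seqProb_eq_exp_mul hP hq, seqProb_eq_exp_mul hQ hq, seqProb_eq_exp_mul hR hq]
  ring

-- On close types all three types may be replaced by that of the test sequence, where the
-- log-likelihood ratio is exactly `-n * genDiv`.
lemma abs_sampleLogRatio_add_le (hα : 0 < α) (hP : FullSupport P) (hQ : FullSupport Q)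
    (hR : FullSupport R) (hn : n ≠ 0)
    {z : (Fin (trainLen α n) → X) × (Fin (trainLen α n) → X) × (Fin n → X)}
    (hz : z ∈ fiberSq (closeTypes η)) :
    let q := genTilt (2 * α / (1 + 2 * α)) R P Q
    |sampleLogRatio P Q R q z + n * genDiv (2 * α / (1 + 2 * α)) R P Q| ≤
      (1 + α * n * (Fintype.card X * η)) * (‖logRatio P q‖ + ‖logRatio Q q‖) := by
  intro q
  obtain ⟨x, x', y⟩ := z
  have hN := trainLen_ne_zero hα hn
  set D := genDiv (2 * α / (1 + 2 * α)) R P Q with hD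
  have h_exact : expect (empDist y) (logRatio R q) + α * expect (empDist y) (logRatio P q) +
      α * expect (empDist y) (logRatio Q q) = -D := by
    rw [← expect_const (isDist_empDist hn y) (-D)]
    simp only [expect, Finset.mul_sum, ← Finset.sum_add_distrib]
    refine Finset.sum_congr rfl fun a _ ↦ ?_
    rw [hD, ← logRatio_genTilt_add hα hR hP hQ a]
    ring
  have h_close {u : Fin (trainLen α n) → X} (hu : (u, y) ∈ closeTypes η) (f : X → ℝ) :
      |trainLen α n * expect (empDist u) f - α * n * expect (empDist y) f| ≤
        (1 + α * n * (Fintype.card X * η)) * ‖f‖ := by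
    refine (abs_trainLen_mul_expect_sub_le (isDist_empDist hN u) hα.le n f).trans ?_
    gcongr
    exact hu
  calc |sampleLogRatio P Q R q (x, x', y) + n * D|
      = |(trainLen α n * expect (empDist x) (logRatio P q) -
            α * n * expect (empDist y) (logRatio P q)) +
          (trainLen α n * expect (empDist x') (logRatio Q q) -
            α * n * expect (empDist y) (logRatio Q q))| := by
        congr 1
        simp only [sampleLogRatio]
        linear_combination n * h_exact
    _ ≤ _ := (abs_add_le _ _).trans (add_le_add (h_close hz.1 _) (h_close hz.2 _))
    _ = (1 + α * n * (Fintype.card X * η)) * (‖logRatio P q‖ + ‖logRatio Q q‖) := by ring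

lemma exists_prob_sampleDist_le_and_le (hα : 0 < α) (hP : FullSupport P) (hQ : FullSupport Q)
    (hR : FullSupport R) :
    let q := genTilt (2 * α / (1 + 2 * α)) R P Q
    let D := genDiv (2 * α / (1 + 2 * α)) R P Q
    ∃ C, ∀ n ≠ 0, ∀ η, 0 ≤ η → ∀ F ⊆ fiberSq (closeTypes η),
      prob (sampleDist α n P Q R) F ≤
        Real.exp (-(n * D) + C * (n * η + 1)) * prob (sampleDist α n q q q) F ∧
      prob (sampleDist α n q q q) F ≤
        Real.exp (n * D + C * (n * η + 1)) * prob (sampleDist α n P Q R) F := by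
  intro q D
  set K := ‖logRatio P q‖ + ‖logRatio Q q‖
  refine ⟨(1 + α * Fintype.card X) * K, fun n hn η hη F hF ↦ ?_⟩
  set B := (1 + α * Fintype.card X) * K * (n * η + 1)
  have h_lik {z} (hz : z ∈ F) : |sampleLogRatio P Q R q z + n * D| ≤ B := by
    have : 0 ≤ (α * Fintype.card X + n * η) * K := by positivity
    refine (abs_sampleLogRatio_add_le hα hP hQ hR hn (hF hz)).trans ?_
    linear_combination this
  have h_ratio (z) : sampleDist α n P Q R z =
      Real.exp (sampleLogRatio P Q R q z) * sampleDist α n q q q z :=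
    sampleDist_eq_exp_mul hP hQ hR (fullSupport_genTilt _ hR hP hQ) z
  have h_nonneg (z) : 0 ≤ sampleDist α n q q q z :=
    have : Nonempty X := ⟨z.2.2 ⟨0, hn.bot_lt⟩⟩
    have hq : IsDist q := isDist_genTilt _ hR hP hQ
    (hq.sampleDist hq hq).1 z
  refine ⟨prob_le_mul_prob fun z hz ↦ ?_, prob_le_mul_prob fun z hz ↦ ?_⟩
  · rw [h_ratio]
    gcongr
    · exact h_nonneg z
    · linarith [(abs_le.1 (h_lik hz)).2]
  · rw [h_ratio, ← mul_assoc, ← Real.exp_add]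
    exact le_mul_of_one_le_left (h_nonneg z)
      (Real.one_le_exp (by linarith [(abs_le.1 (h_lik hz)).1]))

end ChangeOfMeasure

section GutmanTest

variable {M n : ℕ} {α lam : ℝ}

/-- The pairs of a training and a test sequence that Gutman's test regards as compatible. -/
def acceptSet (X : Type*) [Fintype X] [DecidableEq X] (α lam : ℝ) (n : ℕ) :
    Set ((Fin (trainLen α n) → X) × (Fin n → X)) :=
  {z | GJS (empDist z.1) (empDist z.2) α ≤ lam}

lemma acceptSet_subset_closeTypes (hα : 0 < α) (hn : n ≠ 0) (lam : ℝ) :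
    acceptSet X α lam n ⊆ closeTypes (2 * (1 + α) / α * √lam) := fun z hz ↦
  dist_le_of_GJS_le hα (isDist_empDist (trainLen_ne_zero hα hn) z.1) (isDist_empDist hn z.2) hz

lemma closeTypes_subset_acceptSet (hα : 0 < α) (hn : n ≠ 0) {η : ℝ}
    (h : (1 + α) * Fintype.card X * η ≤ lam) : closeTypes η ⊆ acceptSet X α lam n := fun z hz ↦ by
  refine (GJS_le_dist hα (isDist_empDist (trainLen_ne_zero hα hn) z.1)
    (isDist_empDist hn z.2)).trans (le_trans ?_ h)
  gcongr
  exact hz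

lemma eventually_prob_compl_closeTypes_le (hα : 0 < α) {η ε : ℝ} (hη : 0 < η) (hε : 0 < ε) :
    ∀ᶠ n in atTop, ∀ Q : X → ℝ, IsDist Q →
      prob (prodDist (seqProb Q) (seqProb Q))
        (closeTypes η : Set ((Fin (trainLen α n) → X) × (Fin n → X)))ᶜ ≤ ε := by
  have h_typical := eventually_prob_lt_dist_empDist_le (X := X) (half_pos hη) (half_pos hε)
  filter_upwards [h_typical, (tendsto_trainLen hα).eventually h_typical] with n h_test h_train Q hQ
  have h_subset : (closeTypes η : Set ((Fin (trainLen α n) → X) × (Fin n → X)))ᶜ ⊆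
      {z | z.1 ∈ {x | η / 2 < dist (empDist x) Q}} ∪
        {z | z.2 ∈ {y | η / 2 < dist (empDist y) Q}} := by
    intro z hz
    by_contra! h_close
    simp only [Set.mem_union, Set.mem_ofPred_eq, not_or, not_lt] at h_close
    exact hz ((dist_triangle_right _ _ Q).trans (by linarith))
  calc _ ≤ _ := prob_mono (hQ.seqProb.prodDist hQ.seqProb) h_subset
    _ ≤ _ := prob_union_le (hQ.seqProb.prodDist hQ.seqProb) _ _
    _ ≤ ε / 2 + ε / 2 := by
        rw [prob_prodDist_fst hQ.seqProb, prob_prodDist_snd hQ.seqProb]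
        exact add_le_add (h_train Q hQ) (h_test Q hQ)
    _ = ε := add_halves ε

/-- Joint law of the training sequences and the test sequence under the hypothesis `H_j`. -/
noncomputable def hypothesisDist (α : ℝ) (n : ℕ) (P : Fin M → X → ℝ) (j : Fin M) :
    (Fin M → Fin (trainLen α n) → X) × (Fin n → X) → ℝ :=
  prodDist (piDist fun i ↦ seqProb (P i)) (seqProb (P j))

omit [DecidableEq X] in
lemma IsDist.hypothesisDist {P : Fin M → X → ℝ} (hP : ∀ i, IsDist (P i)) (j : Fin M) :
    IsDist (hypothesisDist α n P j) :=
  (IsDist.piDist fun i ↦ (hP i).seqProb).prodDist (hP j).seqProb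

omit [DecidableEq X] in
lemma betaM_eq_prob (ψ : MTest X M α n) (P : Fin M → X → ℝ) (j : Fin M) :
    betaM ψ P j =
      prob (hypothesisDist α n P j) {z | ψ z.1 z.2 ≠ some j ∧ ψ z.1 z.2 ≠ none} := by
  simp only [betaM, prob, expect, Fintype.sum_prod_type, hypothesisDist, prodDist, piDist,
    Set.indicator_apply, Set.mem_ofPred_eq, Pi.one_apply, mul_ite, mul_one, mul_zero]

omit [DecidableEq X] in
lemma zetaM_eq_prob (ψ : MTest X M α n) (P : Fin M → X → ℝ) (j : Fin M) :
    zetaM ψ P j = prob (hypothesisDist α n P j) {z | ψ z.1 z.2 = none} := by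
  simp only [zetaM, prob, expect, Fintype.sum_prod_type, hypothesisDist, prodDist, piDist,
    Set.indicator_apply, Set.mem_ofPred_eq, Pi.one_apply, mul_ite, mul_one, mul_zero]

omit [DecidableEq X] in
lemma prob_hypothesisDist_eval {P : Fin M → X → ℝ} (hP : ∀ i, IsDist (P i)) (i j : Fin M)
    (E : Set ((Fin (trainLen α n) → X) × (Fin n → X))) :
    prob (hypothesisDist α n P j) {z | (z.1 i, z.2) ∈ E} =
      prob (prodDist (seqProb (P i)) (seqProb (P j))) E :=
  prob_prodDist_piDist_eval (fun i ↦ (hP i).seqProb) _ i E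

omit [DecidableEq X] in
lemma prob_hypothesisDist_eval_pair {P : Fin M → X → ℝ} (hP : ∀ i, IsDist (P i)) {i k : Fin M}
    (hik : i ≠ k) (j : Fin M)
    (E : Set ((Fin (trainLen α n) → X) × (Fin (trainLen α n) → X) × (Fin n → X))) :
    prob (hypothesisDist α n P j) {z | (z.1 i, z.1 k, z.2) ∈ E} =
      prob (sampleDist α n (P i) (P k) (P j)) E :=
  prob_prodDist_piDist_eval_pair (fun i ↦ (hP i).seqProb) _ hik E

variable [NeZero M]

lemma gutmanM_eq_none_iff (xs : Fin M → Fin (trainLen α n) → X) (y : Fin n → X) :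
    gutmanM M α lam n xs y = none ↔
      ∃ i k, i ≠ k ∧ (xs i, y) ∈ acceptSet X α lam n ∧ (xs k, y) ∈ acceptSet X α lam n := by
  unfold gutmanM
  split_ifs with h
  · exact iff_of_true rfl h
  · exact iff_of_false not_false h
  · exact iff_of_false not_false h

lemma gutmanM_eq_some_or_eq_none {xs : Fin M → Fin (trainLen α n) → X} {y : Fin n → X} {j : Fin M}
    (hj : (xs j, y) ∈ acceptSet X α lam n) :
    gutmanM M α lam n xs y = some j ∨ gutmanM M α lam n xs y = none := by
  unfold gutmanM
  split_ifs with h_two h_one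
  · exact Or.inr rfl
  · refine Or.inl (congrArg some ?_)
    by_contra h_ne
    exact h_two ⟨h_one.choose, j, h_ne, h_one.choose_spec, hj⟩
  · exact (h_one ⟨j, hj⟩).elim

lemma gutmanM_eq_some_zero {xs : Fin M → Fin (trainLen α n) → X} {y : Fin n → X}
    (h : ∀ i, (xs i, y) ∉ acceptSet X α lam n) : gutmanM M α lam n xs y = some 0 := by
  unfold gutmanM
  split_ifs with h_two h_one
  · obtain ⟨i, -, -, hi, -⟩ := h_two
    exact (h i hi).elim
  · exact (h _ h_one.choose_spec).elim
  · rfl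

lemma betaM_gutmanM_le {P : Fin M → X → ℝ} (hP : ∀ i, IsDist (P i)) (j : Fin M) :
    betaM (gutmanM M α lam n) P j ≤
      prob (prodDist (seqProb (P j)) (seqProb (P j))) (acceptSet X α lam n)ᶜ := by
  rw [betaM_eq_prob, ← prob_hypothesisDist_eval hP j j]
  exact prob_mono (IsDist.hypothesisDist hP j) fun z hz h_accept ↦
    (gutmanM_eq_some_or_eq_none h_accept).elim hz.1 hz.2

-- If no training sequence is accepted then the test declares `H_0`, which is wrong under `H_j`.
lemma one_sub_betaM_gutmanM_le {q : X → ℝ} (hq : IsDist q) {j : Fin M} (hj : j ≠ 0) :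
    1 - betaM (gutmanM M α lam n) (fun _ ↦ q) j ≤
      M * prob (prodDist (seqProb q) (seqProb q)) (acceptSet X α lam n) := by
  have h_law : IsDist (hypothesisDist α n (fun _ : Fin M ↦ q) j) :=
    IsDist.hypothesisDist (fun _ ↦ hq) j
  rw [betaM_eq_prob, ← prob_compl h_law]
  calc _ ≤ prob (hypothesisDist α n (fun _ ↦ q) j)
        (⋃ i ∈ Finset.univ, {z | (z.1 i, z.2) ∈ acceptSet X α lam n}) := by
        refine prob_mono h_law fun z hz ↦ ?_
        by_contra h_reject
        simp only [Finset.mem_univ, Set.iUnion_true, Set.mem_iUnion, Set.mem_ofPred_eq,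
          not_exists] at h_reject
        refine hz ?_
        simp [gutmanM_eq_some_zero h_reject, hj.symm]
    _ ≤ ∑ i, prob (hypothesisDist α n (fun _ ↦ q) j) {z | (z.1 i, z.2) ∈ acceptSet X α lam n} :=
        prob_biUnion_le h_law _ _
    _ = ∑ _i : Fin M, prob (prodDist (seqProb q) (seqProb q)) (acceptSet X α lam n) :=
        Finset.sum_congr rfl fun i _ ↦ prob_hypothesisDist_eval (fun _ ↦ hq) i j _
    _ = M * prob (prodDist (seqProb q) (seqProb q)) (acceptSet X α lam n) := by simp

lemma zetaM_gutmanM_le {P : Fin M → X → ℝ} (hP : ∀ i, IsDist (P i)) (j : Fin M) :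
    zetaM (gutmanM M α lam n) P j ≤ ∑ p ∈ Finset.univ.offDiag,
      prob (sampleDist α n (P p.1) (P p.2) (P j)) (fiberSq (acceptSet X α lam n)) := by
  have h_law := IsDist.hypothesisDist (α := α) (n := n) hP j
  rw [zetaM_eq_prob]
  calc _ ≤ prob (hypothesisDist α n P j) (⋃ p ∈ Finset.univ.offDiag,
          {z | (z.1 p.1, z.1 p.2, z.2) ∈ fiberSq (acceptSet X α lam n)}) := by
        refine prob_mono h_law fun z hz ↦ ?_
        obtain ⟨i, k, hik, h⟩ := (gutmanM_eq_none_iff z.1 z.2).1 hz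
        exact Set.mem_biUnion (x := (i, k)) (by simpa using hik) h
    _ ≤ _ := prob_biUnion_le h_law _ _
    _ = _ := Finset.sum_congr rfl fun p hp ↦
        prob_hypothesisDist_eval_pair hP (Finset.mem_offDiag.1 hp).2.2 j _

lemma prob_fiberSq_acceptSet_le_zetaM {P : Fin M → X → ℝ} (hP : ∀ i, IsDist (P i)) {i k : Fin M}
    (hik : i ≠ k) (j : Fin M) :
    prob (sampleDist α n (P i) (P k) (P j)) (fiberSq (acceptSet X α lam n)) ≤
      zetaM (gutmanM M α lam n) P j := by
  rw [zetaM_eq_prob, ← prob_hypothesisDist_eval_pair hP hik]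
  exact prob_mono (IsDist.hypothesisDist hP j) fun z hz ↦
    (gutmanM_eq_none_iff z.1 z.2).2 ⟨i, k, hik, hz⟩

end GutmanTest

section Exponents

variable {M : ℕ} {α ε δ : ℝ}

lemma eventually_natCast_mul_add_le {a b : ℝ} (h : a < b) (c : ℝ) :
    ∀ᶠ n : ℕ in atTop, n * a + c ≤ n * b := by
  have h_lim : Tendsto (fun n : ℕ ↦ n * (b - a)) atTop atTop :=
    tendsto_natCast_atTop_atTop.atTop_mul_const (sub_pos.2 h)
  filter_upwards [h_lim.eventually_ge_atTop c] with n hn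
  linarith

lemma eventually_prob_fiberSq_acceptSet_le [Nonempty X] {P Q R : X → ℝ} (hα : 0 < α)
    (hδ : 0 < δ) (hP : FullSupport P) (hQ : FullSupport Q) (hR : FullSupport R) :
    ∀ᶠ lam in 𝓝[>] (0 : ℝ), ∀ᶠ n : ℕ in atTop,
      prob (sampleDist α n P Q R) (fiberSq (acceptSet X α lam n)) ≤
        Real.exp (-(n * (genDiv (2 * α / (1 + 2 * α)) R P Q - δ))) := by
  obtain ⟨C, h_change⟩ := exists_prob_sampleDist_le_and_le hα hP hQ hR
  have h_radius : Tendsto (fun lam ↦ C * (2 * (1 + α) / α * √lam)) (𝓝[>] 0) (𝓝 0) := by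
    have h_cont : Continuous fun lam ↦ C * (2 * (1 + α) / α * √lam) := by fun_prop
    simpa using (h_cont.tendsto 0).mono_left nhdsWithin_le_nhds
  filter_upwards [h_radius.eventually_lt_const hδ] with lam h_lam
  filter_upwards [eventually_natCast_mul_add_le h_lam C, eventually_ne_atTop 0] with n h_n hn
  have hq := isDist_genTilt (2 * α / (1 + 2 * α)) hR hP hQ
  refine (h_change n hn _ (by positivity) _
    (fiberSq_mono (acceptSet_subset_closeTypes hα hn lam))).1.trans ?_
  refine (mul_le_of_le_one_right (Real.exp_nonneg _)
    (prob_le_one (hq.sampleDist hq hq) _)).trans (Real.exp_le_exp.2 ?_)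
  linarith

omit [DecidableEq X] in
-- The part of `E` on close types keeps probability `c / 2`; Jensen's inequality squares it, and
-- the change of measure costs the exponent.
lemma eventually_exp_le_prob_fiberSq {P Q R : X → ℝ} {c : ℝ} (hα : 0 < α) (hδ : 0 < δ)
    (hc : 0 < c) (hP : IsDist P) (hQ : IsDist Q) (hR : IsDist R) (hsP : FullSupport P)
    (hsQ : FullSupport Q) (hsR : FullSupport R) :
    let q := genTilt (2 * α / (1 + 2 * α)) R P Q
    ∀ᶠ n : ℕ in atTop, ∀ E : Set ((Fin (trainLen α n) → X) × (Fin n → X)),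
      c ≤ prob (prodDist (seqProb q) (seqProb q)) E →
        Real.exp (-(n * (genDiv (2 * α / (1 + 2 * α)) R P Q + δ))) ≤
          prob (sampleDist α n P Q R) (fiberSq E) := by
  classical
  intro q
  have : Nonempty X := hR.nonempty
  have hq : IsDist q := isDist_genTilt _ hsR hsP hsQ
  obtain ⟨C, h_change⟩ := exists_prob_sampleDist_le_and_le hα hsP hsQ hsR
  obtain ⟨η, hη, hCη⟩ := exists_pos_mul_lt hδ C
  filter_upwards [eventually_prob_compl_closeTypes_le (X := X) hα hη (half_pos hc),
    eventually_natCast_mul_add_le hCη (C - Real.log ((c / 2) ^ 2)), eventually_ne_atTop 0]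
    with n h_typical h_n hn E hE
  let F := E ∩ closeTypes η
  have h_close : c / 2 ≤ prob (prodDist (seqProb q) (seqProb q)) F := by
    have h_split := prob_le_prob_inter_add_prob_compl (hq.seqProb.prodDist hq.seqProb) E
      (closeTypes η)
    linarith [h_typical q hq]
  have h_jensen : (c / 2) ^ 2 ≤ prob (sampleDist α n q q q) (fiberSq F) :=
    (pow_le_pow_left₀ (half_pos hc).le h_close 2).trans (sq_prob_le_prob_fiberSq _ hq.seqProb F)
  set D := genDiv (2 * α / (1 + 2 * α)) R P Q
  have h_tilt := h_jensen.trans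
    (h_change n hn η hη.le (fiberSq F) (fiberSq_mono Set.inter_subset_right)).2
  rw [← div_le_iff₀' (Real.exp_pos _)] at h_tilt
  calc Real.exp (-(n * (D + δ)))
      ≤ Real.exp (Real.log ((c / 2) ^ 2) - (n * D + C * (n * η + 1))) :=
        Real.exp_le_exp.2 (by linarith)
    _ = (c / 2) ^ 2 / Real.exp (n * D + C * (n * η + 1)) := by
        rw [Real.exp_sub, Real.exp_log (by positivity)]
    _ ≤ prob (sampleDist α n P Q R) (fiberSq F) := h_tilt
    _ ≤ prob (sampleDist α n P Q R) (fiberSq E) :=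
        prob_mono (hP.sampleDist hQ hR) (fiberSq_mono Set.inter_subset_left)

lemma eventually_forall_betaM_gutmanM_le [NeZero M] {lam : ℝ} (hα : 0 < α) (hε : 0 < ε)
    (hlam : 0 < lam) :
    ∀ᶠ n in atTop, ∀ P : Fin M → X → ℝ, (∀ i, IsDist (P i)) → ∀ j,
      betaM (gutmanM M α lam n) P j ≤ ε := by
  obtain ⟨η, hη, h_radius⟩ := exists_pos_mul_lt hlam ((1 + α) * Fintype.card X)
  filter_upwards [eventually_prob_compl_closeTypes_le (X := X) hα hη hε, eventually_ne_atTop 0]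
    with n h_typical hn P hP j
  calc betaM (gutmanM M α lam n) P j
      ≤ _ := betaM_gutmanM_le hP j
    _ ≤ _ := prob_mono ((hP j).seqProb.prodDist (hP j).seqProb)
        (Set.compl_subset_compl.2 (closeTypes_subset_acceptSet hα hn h_radius.le))
    _ ≤ ε := h_typical (P j) (hP j)

lemma eventually_forall_zetaM_gutmanM_le [NeZero M] {P : Fin M → X → ℝ} {D : ℝ} (hα : 0 < α)
    (hδ : 0 < δ) (hP : ∀ i, IsDist (P i)) (hs : ∀ i, FullSupport (P i))
    (hD : ∀ j i k, i ≠ k → D ≤ genDiv (2 * α / (1 + 2 * α)) (P j) (P i) (P k)) :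
    ∀ᶠ lam in 𝓝[>] (0 : ℝ), ∀ᶠ n : ℕ in atTop, ∀ j,
      zetaM (gutmanM M α lam n) P j ≤ Real.exp (-(n * (D - δ))) := by
  have : Nonempty X := (hP 0).nonempty
  let pairs : Finset (Fin M × Fin M) := Finset.univ.offDiag
  have h_triple : ∀ᶠ lam in 𝓝[>] (0 : ℝ), ∀ j, ∀ p : Fin M × Fin M, ∀ᶠ n : ℕ in atTop,
      prob (sampleDist α n (P p.1) (P p.2) (P j)) (fiberSq (acceptSet X α lam n)) ≤
        Real.exp (-(n * (genDiv (2 * α / (1 + 2 * α)) (P j) (P p.1) (P p.2) - δ / 2))) :=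
    eventually_all.2 fun j ↦ eventually_all.2 fun p ↦
      eventually_prob_fiberSq_acceptSet_le hα (half_pos hδ) (hs p.1) (hs p.2) (hs j)
  filter_upwards [h_triple] with lam h_lam
  have h_union := eventually_natCast_mul_add_le (neg_lt_neg (sub_lt_sub_left (half_lt_self hδ) D))
    pairs.card
  filter_upwards [eventually_all.2 fun j ↦ eventually_all.2 (h_lam j), h_union] with n h_n h_card j
  calc zetaM (gutmanM M α lam n) P j
      ≤ ∑ p ∈ pairs, prob (sampleDist α n (P p.1) (P p.2) (P j))
          (fiberSq (acceptSet X α lam n)) := zetaM_gutmanM_le hP j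
    _ ≤ ∑ _p ∈ pairs, Real.exp (-(n * (D - δ / 2))) := by
        refine Finset.sum_le_sum fun p hp ↦ (h_n j p).trans ?_
        gcongr
        exact hD j p.1 p.2 (Finset.mem_offDiag.1 hp).2.2
    _ = pairs.card * Real.exp (-(n * (D - δ / 2))) := by rw [Finset.sum_const, nsmul_eq_mul]
    _ ≤ Real.exp pairs.card * Real.exp (-(n * (D - δ / 2))) := by
        gcongr
        linarith [Real.add_one_le_exp (pairs.card : ℝ)]
    _ ≤ Real.exp (-(n * (D - δ))) := by
        rw [← Real.exp_add]
        gcongr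
        linarith

/-- The exponents over which `tauStarGutM` takes its supremum. -/
def achievableExponents (M : ℕ) [NeZero M] (α : ℝ) (n : ℕ) (ε : ℝ) (P : Fin M → X → ℝ) : Set ℝ :=
  {τ | 0 ≤ τ ∧ ∃ lam, 0 ≤ lam ∧
    (∀ Q : Fin M → X → ℝ, (∀ i, IsDist (Q i)) → ∀ j, betaM (gutmanM M α lam n) Q j ≤ ε) ∧
    ∀ j, zetaM (gutmanM M α lam n) P j ≤ Real.exp (-(n * τ))}

lemma eventually_mem_achievableExponents [NeZero M] {P : Fin M → X → ℝ} {D : ℝ} (hα : 0 < α)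
    (hε : 0 < ε) (hδ : 0 < δ) (hδD : δ ≤ D) (hP : ∀ i, IsDist (P i)) (hs : ∀ i, FullSupport (P i))
    (hD : ∀ j i k, i ≠ k → D ≤ genDiv (2 * α / (1 + 2 * α)) (P j) (P i) (P k)) :
    ∀ᶠ n in atTop, D - δ ∈ achievableExponents M α n ε P := by
  obtain ⟨lam, h_zeta, hlam⟩ :=
    ((eventually_forall_zetaM_gutmanM_le (M := M) hα hδ hP hs hD).and self_mem_nhdsWithin).exists
  have h_beta := eventually_forall_betaM_gutmanM_le (X := X) (M := M) hα hε hlam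
  filter_upwards [h_zeta, h_beta] with n h_zeta_n h_beta_n
  exact ⟨sub_nonneg.2 hδD, lam, le_of_lt hlam, h_beta_n, h_zeta_n⟩

lemma eventually_forall_achievableExponents_le [NeZero M] {P : Fin M → X → ℝ}
    (hα : 0 < α) (hε : ε < 1) (hδ : 0 < δ) (hP : ∀ i, IsDist (P i)) (hs : ∀ i, FullSupport (P i))
    {i k : Fin M} (hik : i ≠ k) (j : Fin M) :
    ∀ᶠ n in atTop, ∀ τ ∈ achievableExponents M α n ε P,
      τ ≤ genDiv (2 * α / (1 + 2 * α)) (P j) (P i) (P k) + δ := by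
  have : Nonempty X := (hP 0).nonempty
  have : Nontrivial (Fin M) := ⟨i, k, hik⟩
  obtain ⟨l, hl⟩ := exists_ne (0 : Fin M)
  have hM : (0 : ℝ) < M := Nat.cast_pos.2 (NeZero.pos M)
  have hc : 0 < (1 - ε) / M := div_pos (sub_pos.2 hε) hM
  filter_upwards [eventually_exp_le_prob_fiberSq hα hδ hc (hP i) (hP k) (hP j) (hs i) (hs k) (hs j),
    eventually_gt_atTop 0] with n h_exp hn τ hτ
  obtain ⟨-, lam, -, h_beta, h_zeta⟩ := hτ
  have hq := isDist_genTilt (2 * α / (1 + 2 * α)) (hs j) (hs i) (hs k)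
  have h_accept := (sub_le_sub_left (h_beta _ (fun _ ↦ hq) l) 1).trans
    (one_sub_betaM_gutmanM_le hq hl)
  rw [← div_le_iff₀' hM] at h_accept
  have h_chain := ((h_exp _ h_accept).trans
    (prob_fiberSq_acceptSet_le_zetaM hP hik j)).trans (h_zeta j)
  rw [Real.exp_le_exp, neg_le_neg_iff] at h_chain
  exact le_of_mul_le_mul_left h_chain (Nat.cast_pos.2 hn)

lemma eventually_sub_le_tauStarGutM [NeZero M] [Nontrivial (Fin M)] {P : Fin M → X → ℝ} {D : ℝ}
    (hα : 0 < α) (hε : ε ∈ Set.Ioo 0 1) (hδ : 0 < δ) (hP : ∀ i, IsDist (P i))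
    (hs : ∀ i, FullSupport (P i))
    (hD : ∀ j i k, i ≠ k → D ≤ genDiv (2 * α / (1 + 2 * α)) (P j) (P i) (P k)) :
    ∀ᶠ n in atTop, D - δ ≤ tauStarGutM M α n ε P := by
  obtain hδD | hδD := le_or_gt δ D
  · obtain ⟨i, k, hik⟩ := exists_pair_ne (Fin M)
    filter_upwards [eventually_mem_achievableExponents hα hε.1 hδ hδD hP hs hD,
      eventually_forall_achievableExponents_le hα hε.2 hδ hP hs hik 0] with n h_mem h_bdd
    exact le_csSup ⟨_, h_bdd⟩ h_mem
  · exact Eventually.of_forall fun n ↦ (sub_neg.2 hδD).le.trans (Real.sSup_nonneg fun τ hτ ↦ hτ.1)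

lemma eventually_tauStarGutM_le [NeZero M] {P : Fin M → X → ℝ} (hα : 0 < α) (hε : ε < 1)
    (hδ : 0 < δ) (hP : ∀ i, IsDist (P i)) (hs : ∀ i, FullSupport (P i)) {i k : Fin M}
    (hik : i ≠ k) (j : Fin M) :
    ∀ᶠ n in atTop,
      tauStarGutM M α n ε P ≤ genDiv (2 * α / (1 + 2 * α)) (P j) (P i) (P k) + δ := by
  have h_nonneg := genDiv_nonneg (two_mul_div_mem_Ico hα.le) (hP j) (hP i) (hP k)
  filter_upwards [eventually_forall_achievableExponents_le hα hε hδ hP hs hik j] with n h_bdd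
  exact Real.sSup_le h_bdd (by positivity)

end Exponents

/-- Proposition 2 of the paper: Gutman's M-ary test in the dual setting:
`τ*(n,α,ε|Ψ_n^Gut,P) → min_{j} min_{i≠k} D_{2α/(1+2α)}(P_j,P_i,P_k)` as `n → ∞`. -/
theorem tauStarGutM_limit {X : Type*} [Fintype X] [DecidableEq X]
    (M : ℕ) [NeZero M] (hM : 2 ≤ M)
    (α ε : ℝ) (hα : 0 < α) (hε : ε ∈ Set.Ioo (0 : ℝ) 1)
    (P : Fin M → X → ℝ) (hP : ∀ i, IsDist (P i)) (hs : ∀ i, FullSupport (P i)) :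
    Filter.Tendsto (fun n : ℕ => tauStarGutM M α n ε P) Filter.atTop
      (nhds (sInf {v : ℝ | ∃ j i k : Fin M, i ≠ k ∧
        v = genDiv (2 * α / (1 + 2 * α)) (P j) (P i) (P k)})) := by
  set V := {v : ℝ | ∃ j i k : Fin M, i ≠ k ∧ v = genDiv (2 * α / (1 + 2 * α)) (P j) (P i) (P k)}
  have : Nontrivial (Fin M) := Fin.nontrivial_iff_two_le.2 hM
  have hV_finite : V.Finite :=
    (Set.finite_range fun p : Fin M × Fin M × Fin M ↦
      genDiv (2 * α / (1 + 2 * α)) (P p.1) (P p.2.1) (P p.2.2)).subset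
      fun v ⟨j, i, k, _, hv⟩ ↦ ⟨(j, i, k), hv.symm⟩
  have hV_nonempty : V.Nonempty :=
    let ⟨i, k, hik⟩ := exists_pair_ne (Fin M)
    ⟨_, i, i, k, hik, rfl⟩
  obtain ⟨j, i, k, hik, h_min⟩ := hV_nonempty.csInf_mem hV_finite
  have h_least (j i k : Fin M) (hik : i ≠ k) :
      sInf V ≤ genDiv (2 * α / (1 + 2 * α)) (P j) (P i) (P k) :=
    csInf_le hV_finite.bddBelow ⟨j, i, k, hik, rfl⟩
  refine Metric.nhds_basis_closedBall.tendsto_right_iff.2 fun δ hδ ↦ ?_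
  filter_upwards [eventually_sub_le_tauStarGutM hα hε hδ hP hs h_least,
    eventually_tauStarGutM_le hα hε.2 hδ hP hs hik j] with n h_lower h_upper
  rw [← h_min] at h_upper
  exact Real.closedBall_eq_Icc ▸ ⟨h_lower, h_upper⟩

end Classification
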